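/- arXiv:1002.2594 — 5 statements merged into one kernel-verified Lean document; each statement's English description precedes it below -/
import Mathlib

section
/- Let Ω be an algebraic closure of F_2 and let d ≥ 1 be odd. Fix x_0 ∈ Ω such that U_0 = F_2(x_0) has degree d over F_2 and Tr_{U_0/F_2}(x_0) ≠ 0. Let x_1, x_2, … ∈ Ω satisfy x_1^2 + x_1 = x_0, x_2^2 + x_2 = x_1, and x_i^2 + x_i = x_{i−1}^3 for all i ≥ 3. Then for every i ≥ 0 the element x_i generates F_2(x_0, …, x_i) over F_2, and [F_2(x_i) : F_2] = 2^i · d. -/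
open IntermediateField

/-!
Put `n = 2 ^ i * d` and let `σ` be the `n`-th power of Frobenius. The element `y = x (i + 1)` has
`σ y = y + 1` exactly when `y ^ 2 + y` has trace `1`, the trace being the sum of the first `n`
iterates of Frobenius. The trace of `y ^ 3` over `2 * n` iterates is the trace of
`y ^ 3 + (y + 1) ^ 3 = (y ^ 2 + y) + 1` over `n` iterates, which is `1 + n = 1` for even `n`; so the
property `σ y = y + 1` passes to the next level. For `y = x 1`, where `n = d` is odd, it is `y`
itself, not `y ^ 3`, whose trace over `2 * n` iterates is `n = 1`, whence the linear second step.

Moreover `y ∈ F_2(y ^ 3)`: a conjugate of `y` with the same cube is `w * y` with `w ^ 3 = 1`, and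
`σ`, an even power of Frobenius, fixes `w`. Since `σ` commutes with conjugation,
`w * (y + 1) = w * y + 1`, hence `w = 1`. So the fields `F_2(x i)` increase, and as `σ` moves `y`
while `σ ^ 2` fixes it, each step doubles the degree.
-/

section FrobeniusTrace

/-- The partial sum `a + a ^ q + ⋯ + a ^ q ^ (n - 1)` of the Frobenius orbit of `a`, i.e. the trace
to `F_q` of an element `a` of `F_(q ^ n)`. It is defined for every element of a semiring, so that
traces can be computed without naming a field of definition. -/
def frobeniusTrace {R : Type*} [Semiring R] (q n : ℕ) (a : R) : R :=
  ∑ j ∈ Finset.range n, a ^ q ^ j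

theorem frobeniusTrace_one {R : Type*} [Semiring R] (q n : ℕ) :
    frobeniusTrace q n (1 : R) = n := by
  simp [frobeniusTrace]

theorem frobeniusTrace_nat_add {R : Type*} [Semiring R] (q m n : ℕ) (a : R) :
    frobeniusTrace q (m + n) a = frobeniusTrace q m a + frobeniusTrace q n (a ^ q ^ m) := by
  simp only [frobeniusTrace, Finset.sum_range_add, ← pow_mul, ← pow_add]

theorem algebraMap_trace_eq_frobeniusTrace {K L : Type*} [Field K] [Finite K] [Field L]
    [Algebra K L] (E : IntermediateField K L) [FiniteDimensional K E] (a : E) :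
    algebraMap K L (Algebra.trace K E a) =
      frobeniusTrace (Nat.card K) (Module.finrank K E) (a : L) := by
  have : Finite E := Module.finite_of_finite K
  rw [IsScalarTower.algebraMap_apply K E L, FiniteField.algebraMap_trace_eq_sum_pow]
  simp [frobeniusTrace]

variable {R : Type*} [CommRing R] {p : ℕ} [Fact p.Prime] [CharP R p]

theorem frobeniusTrace_add (n : ℕ) (a b : R) :
    frobeniusTrace p n (a + b) = frobeniusTrace p n a + frobeniusTrace p n b := by
  simp only [frobeniusTrace, add_pow_char_pow, Finset.sum_add_distrib]

theorem frobeniusTrace_two_mul (n : ℕ) (a : R) :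
    frobeniusTrace p (2 * n) a = frobeniusTrace p n (a + a ^ p ^ n) := by
  rw [two_mul, frobeniusTrace_nat_add, frobeniusTrace_add]

theorem frobeniusTrace_pow_sub_self (n : ℕ) (y : R) :
    frobeniusTrace p n (y ^ p - y) = y ^ p ^ n - y := by
  simp only [frobeniusTrace, sub_pow_char_pow, ← pow_mul, ← pow_succ']
  simpa using Finset.sum_range_sub (fun j ↦ y ^ p ^ j) n

end FrobeniusTrace

section Translation

variable {p : ℕ} [Fact p.Prime]

theorem pow_pow_mul_eq_add_natCast {R : Type*} [CommRing R] [CharP R p] {y : R} {n : ℕ}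
    (hy : y ^ p ^ n = y + 1) (k : ℕ) : y ^ p ^ (k * n) = y + k := by
  induction k with
  | zero => simp
  | succ k ih =>
    rw [add_one_mul, add_comm, pow_add, pow_mul, hy, add_pow_char_pow, ih, one_pow, add_assoc,
      Nat.cast_succ]

theorem pow_pow_prime_mul_eq_self {R : Type*} [CommRing R] [CharP R p] {y : R} {n : ℕ}
    (hy : y ^ p ^ n = y + 1) : y ^ p ^ (p * n) = y := by
  rw [pow_pow_mul_eq_add_natCast hy, CharP.cast_eq_zero, add_zero]

theorem pow_pow_eq_self_of_pow_pow_pow_eq {F : Type*} [Field F] [CharP F p] {y : F} {k m n : ℕ}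
    (hk : k ∣ p ^ n - 1) (hy : y ^ p ^ n = y + 1) (hyk : (y ^ k) ^ p ^ m = y ^ k) :
    y ^ p ^ m = y := by
  have hp : p ^ n ≠ 0 := pow_ne_zero n (Fact.out : p.Prime).ne_zero
  have hy0 : y ≠ 0 := by
    rintro rfl
    simp [zero_pow hp] at hy
  obtain ⟨w, hw⟩ : ∃ w, y ^ p ^ m = w * y := ⟨y ^ p ^ m / y, (div_mul_cancel₀ _ hy0).symm⟩
  have hwk : w ^ k = 1 := by
    rw [pow_right_comm, hw, mul_pow] at hyk
    exact (mul_eq_right₀ (pow_ne_zero k hy0)).mp hyk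
  have hwn : w ^ p ^ n = w := by
    obtain ⟨c, hc⟩ := hk
    rw [← Nat.sub_one_add_one hp, pow_succ, hc, pow_mul, hwk, one_pow, one_mul]
  have hw1 : w * y + w = w * y + 1 := calc
    w * y + w = (y ^ p ^ m) ^ p ^ n := by rw [hw, mul_pow, hwn, hy, mul_add_one]
    _ = (y ^ p ^ n) ^ p ^ m := pow_right_comm ..
    _ = w * y + 1 := by rw [hy, add_pow_char_pow, hw, one_pow]
  rw [hw, add_left_cancel hw1, one_mul]

end Translation

section CharTwo

variable {R : Type*} [CommRing R] [CharP R 2] {y z : R} {n : ℕ}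

theorem pow_two_pow_eq_add_one_iff :
    y ^ 2 ^ n = y + 1 ↔ frobeniusTrace 2 n (y ^ 2 + y) = 1 := by
  rw [← CharTwo.sub_eq_add (y ^ 2), frobeniusTrace_pow_sub_self, sub_eq_iff_eq_add']

theorem pow_two_pow_two_mul_eq_add_one_of_sq_add_self_eq (hn : Odd n) (hy : y ^ 2 ^ n = y + 1)
    (hz : z ^ 2 + z = y) : z ^ 2 ^ (2 * n) = z + 1 := by
  have hn1 : (n : R) = 1 := by
    rw [CharTwo.natCast_eq_ite, if_neg (Nat.not_even_iff_odd.mpr hn)]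
  rw [pow_two_pow_eq_add_one_iff, hz, frobeniusTrace_two_mul, hy, CharTwo.add_cancel_left,
    frobeniusTrace_one, hn1]

theorem pow_two_pow_two_mul_eq_add_one_of_sq_add_self_eq_cube (hn : Even n)
    (hy : y ^ 2 ^ n = y + 1) (hz : z ^ 2 + z = y ^ 3) : z ^ 2 ^ (2 * n) = z + 1 := by
  have hn0 : (n : R) = 0 := by
    rw [CharTwo.natCast_eq_ite, if_pos hn]
  have hy3 : y ^ 3 + (y ^ 3) ^ 2 ^ n = (y ^ 2 + y) + 1 := by
    rw [pow_right_comm, hy]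
    linear_combination (y ^ 3 + y ^ 2 + y) * CharTwo.two_eq_zero (R := R)
  rw [pow_two_pow_eq_add_one_iff, hz, frobeniusTrace_two_mul, hy3, frobeniusTrace_add,
    pow_two_pow_eq_add_one_iff.mp hy, frobeniusTrace_one, hn0, add_zero]

end CharTwo

section FiniteBase

variable {K L : Type*} [Field K] [Finite K] [Field L] [Algebra K L]

theorem isIntegral_of_pow_card_pow_eq_self {a : L} {m : ℕ} (hm : m ≠ 0)
    (ha : a ^ Nat.card K ^ m = a) : IsIntegral K a := by
  refine IsAlgebraic.isIntegral ⟨Polynomial.X ^ Nat.card K ^ m - Polynomial.X, ?_, by simp [ha]⟩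
  exact FiniteField.X_pow_card_pow_sub_X_ne_zero K hm Finite.one_lt_card

theorem pow_card_pow_eq_self_iff_finrank_adjoin_dvd {a : L} (ha : IsIntegral K a) (m : ℕ) :
    a ^ Nat.card K ^ m = a ↔ Module.finrank K K⟮a⟯ ∣ m := by
  rw [adjoin.finrank ha, (minpoly.irreducible ha).natDegree_dvd_iff_dvd_X_pow_card_pow_sub_X,
    minpoly.dvd_iff]
  simp [sub_eq_zero]

theorem mem_iff_pow_card_pow_finrank_eq_self (E : IntermediateField K L) [FiniteDimensional K E]
    {a : L} : a ∈ E ↔ a ^ Nat.card K ^ Module.finrank K E = a := by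
  have : Finite E := Module.finite_of_finite K
  rw [← Module.natCard_eq_pow_finrank]
  constructor
  · intro ha
    have := Fintype.ofFinite E
    simpa using congrArg Subtype.val (FiniteField.pow_card (⟨a, ha⟩ : E))
  · intro ha
    rw [← pow_one (Nat.card E)] at ha
    have hint : IsIntegral E a := isIntegral_of_pow_card_pow_eq_self one_ne_zero ha
    rw [pow_card_pow_eq_self_iff_finrank_adjoin_dvd hint, Nat.dvd_one,
      finrank_adjoin_simple_eq_one_iff, mem_bot] at ha
    obtain ⟨b, rfl⟩ := ha
    exact b.2

end FiniteBase

section PrimeField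

variable {p : ℕ} [Fact p.Prime] {L : Type*} [Field L] [Algebra (ZMod p) L] {y : L} {n : ℕ}

theorem mem_of_pow_mem_of_pow_pow_eq_add_one {k : ℕ} (hk : k ∣ p ^ n - 1)
    (hy : y ^ p ^ n = y + 1) (E : IntermediateField (ZMod p) L) [FiniteDimensional (ZMod p) E]
    (hyk : y ^ k ∈ E) : y ∈ E := by
  have : CharP L p := charP_of_injective_algebraMap' (ZMod p) p
  rw [mem_iff_pow_card_pow_finrank_eq_self, Nat.card_zmod] at hyk ⊢
  exact pow_pow_eq_self_of_pow_pow_pow_eq hk hy hyk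

theorem isIntegral_of_pow_pow_eq_add_one (hy : y ^ p ^ n = y + 1) : IsIntegral (ZMod p) y := by
  have : CharP L p := charP_of_injective_algebraMap' (ZMod p) p
  have hn : n ≠ 0 := by
    rintro rfl
    simp at hy
  refine isIntegral_of_pow_card_pow_eq_self (mul_ne_zero (Fact.out : p.Prime).ne_zero hn) ?_
  rw [Nat.card_zmod, pow_pow_prime_mul_eq_self hy]

theorem finrank_adjoin_eq_prime_mul (hy : y ^ p ^ n = y + 1)
    (hn : n ∣ Module.finrank (ZMod p) (ZMod p)⟮y⟯) :
    Module.finrank (ZMod p) (ZMod p)⟮y⟯ = p * n := by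
  have : CharP L p := charP_of_injective_algebraMap' (ZMod p) p
  have fixed_iff (m : ℕ) : y ^ p ^ m = y ↔ Module.finrank (ZMod p) (ZMod p)⟮y⟯ ∣ m := by
    simpa using pow_card_pow_eq_self_iff_finrank_adjoin_dvd (isIntegral_of_pow_pow_eq_add_one hy) m
  have hdvd : Module.finrank (ZMod p) (ZMod p)⟮y⟯ ∣ p * n :=
    (fixed_iff _).mp (pow_pow_prime_mul_eq_self hy)
  have hndvd : ¬ Module.finrank (ZMod p) (ZMod p)⟮y⟯ ∣ n := by
    rw [← fixed_iff, hy]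
    simp
  obtain ⟨c, hc⟩ := hn
  have hn0 : 0 < n := Nat.pos_of_ne_zero fun h ↦ hndvd (h ▸ dvd_zero _)
  rw [hc, mul_comm p] at hdvd
  rcases (Nat.dvd_prime Fact.out).mp (Nat.dvd_of_mul_dvd_mul_left hn0 hdvd) with rfl | rfl
  · exact absurd (by rw [hc, mul_one]) hndvd
  · rw [hc, mul_comm]

end PrimeField

theorem adjoin_simple_eq_adjoin_image_Iic {K L : Type*} [Field K] [Field L] [Algebra K L]
    {x : ℕ → L} (hx : ∀ i, x i ∈ K⟮x (i + 1)⟯) (i : ℕ) : K⟮x i⟯ = adjoin K (x '' Set.Iic i) := by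
  have mono : Monotone fun i ↦ K⟮x i⟯ :=
    monotone_nat_of_le_succ fun i ↦ adjoin_simple_le_iff.mpr (hx i)
  apply le_antisymm
  · exact adjoin.mono K _ _ (Set.singleton_subset_iff.mpr ⟨i, Set.self_mem_Iic, rfl⟩)
  · rw [adjoin_le_iff]
    rintro _ ⟨j, hj, rfl⟩
    exact mono hj (mem_adjoin_simple_self K (x j))

/-- The equations of the Cantor-type tower: two linear Artin–Schreier steps, followed by steps
whose right-hand side is the cube of the previous element. -/
structure IsCantorTower {R : Type*} [Semiring R] (x : ℕ → R) : Prop where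
  sq_add_self_one : x 1 ^ 2 + x 1 = x 0
  sq_add_self_two : x 2 ^ 2 + x 2 = x 1
  sq_add_self_succ (i : ℕ) (hi : 2 ≤ i) : x (i + 1) ^ 2 + x (i + 1) = x i ^ 3

namespace IsCantorTower

theorem pow_two_pow_eq_add_one {R : Type*} [CommRing R] [CharP R 2] {x : ℕ → R}
    (hx : IsCantorTower x) {d : ℕ} (hd : Odd d) (htr : frobeniusTrace 2 d (x 0) = 1) (i : ℕ) :
    x (i + 1) ^ 2 ^ (2 ^ i * d) = x (i + 1) + 1 := by
  induction i with
  | zero => rwa [pow_zero, one_mul, pow_two_pow_eq_add_one_iff, hx.sq_add_self_one]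
  | succ i ih =>
    rw [pow_succ', mul_assoc]
    rcases i with - | i
    · rw [pow_zero, one_mul] at ih ⊢
      exact pow_two_pow_two_mul_eq_add_one_of_sq_add_self_eq hd ih hx.sq_add_self_two
    · exact pow_two_pow_two_mul_eq_add_one_of_sq_add_self_eq_cube
        ((even_two.pow_of_ne_zero i.succ_ne_zero).mul_right d) ih
        (hx.sq_add_self_succ (i + 2) (Nat.le_add_left 2 i))

variable {L : Type*} [Field L] [Algebra (ZMod 2) L] {x : ℕ → L} {d : ℕ}

theorem mem_of_succ_mem (hx : IsCantorTower x)
    (hy : ∀ i, x (i + 1) ^ 2 ^ (2 ^ i * d) = x (i + 1) + 1) (E : IntermediateField (ZMod 2) L)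
    [FiniteDimensional (ZMod 2) E] {i : ℕ} (hi : x (i + 1) ∈ E) : x i ∈ E := by
  have hmem : x (i + 1) ^ 2 + x (i + 1) ∈ E := add_mem (pow_mem hi 2) hi
  match i with
  | 0 => rwa [hx.sq_add_self_one] at hmem
  | 1 => rwa [hx.sq_add_self_two] at hmem
  | i + 2 =>
    rw [hx.sq_add_self_succ (i + 2) (Nat.le_add_left 2 i)] at hmem
    have h3 : 3 ∣ 2 ^ (2 ^ (i + 1) * d) - 1 := by
      rw [pow_succ', mul_assoc, pow_mul]
      exact Nat.sub_one_dvd_pow_sub_one _ _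
    exact mem_of_pow_mem_of_pow_pow_eq_add_one h3 (hy (i + 1)) E hmem

theorem mem_adjoin_succ (hx : IsCantorTower x)
    (hy : ∀ i, x (i + 1) ^ 2 ^ (2 ^ i * d) = x (i + 1) + 1) (i : ℕ) :
    x i ∈ (ZMod 2)⟮x (i + 1)⟯ := by
  have := adjoin.finiteDimensional (isIntegral_of_pow_pow_eq_add_one (hy i))
  exact hx.mem_of_succ_mem hy _ (mem_adjoin_simple_self _ _)

theorem finrank_adjoin (hx : IsCantorTower x)
    (hy : ∀ i, x (i + 1) ^ 2 ^ (2 ^ i * d) = x (i + 1) + 1)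
    (hd : Module.finrank (ZMod 2) (ZMod 2)⟮x 0⟯ = d) (i : ℕ) :
    Module.finrank (ZMod 2) (ZMod 2)⟮x i⟯ = 2 ^ i * d := by
  induction i with
  | zero => rw [hd, pow_zero, one_mul]
  | succ i ih =>
    have hdvd : 2 ^ i * d ∣ Module.finrank (ZMod 2) (ZMod 2)⟮x (i + 1)⟯ :=
      ih ▸ finrank_dvd_of_le_right (adjoin_simple_le_iff.mpr (hx.mem_adjoin_succ hy i))
    rw [finrank_adjoin_eq_prime_mul (hy i) hdvd, pow_succ', mul_assoc]

end IsCantorTower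

theorem cantor_tower_char_two_odd_degree_is_primitive_general
    {d : ℕ} (hd : Odd d) {L : Type*} [Field L] [Algebra (ZMod 2) L] {x : ℕ → L}
    {U : ℕ → IntermediateField (ZMod 2) L} (hU : ∀ i, U i = adjoin (ZMod 2) (x '' Set.Iic i))
    (hdeg : Module.finrank (ZMod 2) (U 0) = d) (hx0 : x 0 ∈ U 0)
    (htr : Algebra.trace (ZMod 2) (U 0) ⟨x 0, hx0⟩ ≠ 0) (hx : IsCantorTower x) (i : ℕ) :
    (ZMod 2)⟮x i⟯ = U i ∧ Module.finrank (ZMod 2) (ZMod 2)⟮x i⟯ = 2 ^ i * d := by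
  have : CharP L 2 := charP_of_injective_algebraMap' (ZMod 2) 2
  have : FiniteDimensional (ZMod 2) (U 0) := .of_finrank_pos (hdeg ▸ hd.pos)
  have htr0 : frobeniusTrace 2 d (x 0) = 1 := by
    have htr1 : Algebra.trace (ZMod 2) (U 0) ⟨x 0, hx0⟩ = 1 := Fin.eq_one_of_ne_zero _ htr
    have htrace := algebraMap_trace_eq_frobeniusTrace (U 0) ⟨x 0, hx0⟩
    rwa [htr1, map_one, Nat.card_zmod, hdeg, eq_comm] at htrace
  have hy := hx.pow_two_pow_eq_add_one hd htr0
  have hadjoin (j : ℕ) : (ZMod 2)⟮x j⟯ = U j := by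
    rw [hU, adjoin_simple_eq_adjoin_image_Iic (hx.mem_adjoin_succ hy)]
  exact ⟨hadjoin i, hx.finrank_adjoin hy (by rw [hadjoin, hdeg]) i⟩

/-- Let `Ω` be an algebraic closure of `F_2` and let `d ≥ 1` be odd. Fix
`x_0 ∈ Ω` with `U_0 = F_2(x_0)` of degree `d` over `F_2` and `Tr_{U_0/F_2}(x_0) ≠ 0`. Let
`x_1, x_2, … ∈ Ω` satisfy `x_1² + x_1 = x_0`, `x_2² + x_2 = x_1`, and
`x_i² + x_i = x_{i−1}³` for all `i ≥ 3`. Then for every `i ≥ 0` the element `x_i` generates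
`F_2(x_0, …, x_i)` over `F_2`, and `[F_2(x_i) : F_2] = 2^i · d`. -/
theorem cantor_tower_char_two_odd_degree_is_primitive
    (d : ℕ) (hd1 : 1 ≤ d) (hdodd : Odd d)
    (Ω : Type*) [Field Ω] [Algebra (ZMod 2) Ω] [IsAlgClosure (ZMod 2) Ω]
    (x : ℕ → Ω)
    (U : ℕ → IntermediateField (ZMod 2) Ω)
    (hU : ∀ i, U i = IntermediateField.adjoin (ZMod 2) (x '' Set.Iic i))
    (hdeg : Module.finrank (ZMod 2) ↥(U 0) = d)
    (hx0 : x 0 ∈ U 0)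
    (htr0 : Algebra.trace (ZMod 2) ↥(U 0) ⟨x 0, hx0⟩ ≠ 0)
    (hx1 : x 1 ^ 2 + x 1 = x 0)
    (hx2 : x 2 ^ 2 + x 2 = x 1)
    (hxi : ∀ i, 2 ≤ i → x (i + 1) ^ 2 + x (i + 1) = x i ^ 3) :
    ∀ i, (ZMod 2)⟮x i⟯ = U i ∧
      Module.finrank (ZMod 2) ↥((ZMod 2)⟮x i⟯) = 2 ^ i * d := by
  exact cantor_tower_char_two_odd_degree_is_primitive_general hdodd hU hdeg hx0 htr0
    ⟨hx1, hx2, hxi⟩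
end

section
/- Let p be a prime, let Φ ∈ F_p[X] be the reduction modulo p of the (2p−1)-th cyclotomic polynomial, let A = F_p[X]/(Φ), and let x = X mod Φ ∈ A. For a polynomial Q ∈ F_p[Y], define Q* = ∏_{i=0}^{2p−2} Q(x^i · Y) ∈ A[Y]. Then every coefficient of Q* lies in the image of F_p in A (so Q* is the image of a polynomial in F_p[Y]), and moreover there exists q* ∈ F_p[Y] such that Q* = q*(Y^{2p−1}); that is, every coefficient of Q* in a degree not divisible by 2p−1 is zero. -/
/-!
The monic polynomial `Tⁿ - Y ∈ R[Y][T]` has a resultant with `Q(T)`, which is some `q ∈ R[Y]`.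
Resultants commute with base change, so substituting `Yⁿ` for `Y` shows that `q(Yⁿ)` is the
resultant of `Tⁿ - Yⁿ` with `Q(T)`. Over a ring containing a root `x` of the `n`-th cyclotomic
polynomial, `Tⁿ - Yⁿ` is the product of the `T - xⁱ Y` for `i < n`, so that the resultant is the
product of the `Q(xⁱ Y)`. This factorisation is specialised from `ℤ[ζₙ][Y]`, a domain of
characteristic zero, and so holds over every commutative ring.
-/

open Polynomial

theorem isRoot_cyclotomic_adjoinRoot_root (n : ℕ) (R : Type*) [CommRing R] :
    (cyclotomic n (AdjoinRoot (cyclotomic n R))).IsRoot (AdjoinRoot.root (cyclotomic n R)) := by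
  rw [← map_cyclotomic n (AdjoinRoot.of (cyclotomic n R))]
  exact AdjoinRoot.isRoot_root _

section CommRing

variable {B : Type*} [CommRing B]

theorem X_pow_sub_C_pow_eq_prod_of_isRoot_cyclotomic {n : ℕ} {x : B}
    (hx : (cyclotomic n B).IsRoot x) (y : B) :
    X ^ n - C (y ^ n) = ∏ i ∈ Finset.range n, (X - C (x ^ i * y)) := by
  obtain rfl | hn := n.eq_zero_or_pos
  · have : Subsingleton B := subsingleton_of_zero_eq_one (by simpa using hx.symm)
    exact Subsingleton.elim _ _
  have : IsDomain (AdjoinRoot (cyclotomic n ℤ)) :=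
    AdjoinRoot.isDomain_of_prime (cyclotomic.irreducible hn).prime
  have : CharZero (AdjoinRoot (cyclotomic n ℤ)) :=
    charZero_of_injective_ringHom
      (AdjoinRoot.of.injective_of_degree_ne_zero (degree_cyclotomic_pos n ℤ hn).ne')
  have hζ : IsPrimitiveRoot (AdjoinRoot.root (cyclotomic n ℤ)) n :=
    (isRoot_cyclotomic_iff_charZero hn).mp (isRoot_cyclotomic_adjoinRoot_root n ℤ)
  let φ : AdjoinRoot (cyclotomic n ℤ) →+* B :=
    AdjoinRoot.lift (Int.castRingHom B) x (by rwa [← eval_map, map_cyclotomic])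
  have hφ : φ (AdjoinRoot.root (cyclotomic n ℤ)) = x := AdjoinRoot.lift_root _
  have hfactor := X_pow_sub_C_eq_prod (hζ.map_of_injective C_injective) hn
    (rfl : (X : (AdjoinRoot (cyclotomic n ℤ))[X]) ^ n = X ^ n)
  simpa [Polynomial.map_prod, hφ] using congrArg (map (eval₂RingHom φ y)) hfactor

theorem resultant_prod_X_sub_C_left {ι : Type*} (s : Finset ι) (a : ι → B) {g : B[X]} {m : ℕ}
    (hg : g.natDegree ≤ m) :
    (∏ i ∈ s, (X - C (a i))).resultant g s.card m = ∏ i ∈ s, g.eval (a i) := by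
  nontriviality B
  have h := resultant_prod_left s (fun i ↦ X - C (a i)) g m (by simp) hg
  simpa only [natDegree_finsetProd_X_sub_C_eq_card, natDegree_X_sub_C,
    resultant_X_sub_C_left _ _ _ hg] using h

end CommRing

section Graeffe

variable {R B : Type*} [CommRing R] [CommRing B]

/-- The Graeffe transform of order `n` of a polynomial `Q`: the norm of `Q(Y^(1/n))` from
`R[Y^(1/n)]` down to `R[Y]`, encoded as the resultant of `T ^ n - Y` and `Q(T)` in the variable
`T`, with coefficients in `R[Y]`. The classical case is `n = 2`, where it is the polynomial `q`
with `q(Y²) = Q(Y) Q(-Y)`. For `n = 0` the value is a junk power of `1 - Y`. -/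
noncomputable def graeffe (n : ℕ) (Q : R[X]) : R[X] :=
  resultant (X ^ n - C X) (Q.map C) n Q.natDegree

theorem expand_map_graeffe (φ : R →+* B) {n : ℕ} {x : B} (hx : (cyclotomic n B).IsRoot x)
    (Q : R[X]) :
    expand B n ((graeffe n Q).map φ) =
      ∏ i ∈ Finset.range n, (Q.map φ).comp (C (x ^ i) * X) := by
  let ψ : R[X] →+* B[X] := (expand B n : B[X] →+* B[X]).comp (mapRingHom φ)
  have hCx : (cyclotomic n B[X]).IsRoot (C x) := by
    rw [← map_cyclotomic n (C : B →+* B[X])]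
    exact hx.map
  have hψT : (X ^ n - C X : R[X][X]).map ψ = X ^ n - C (X ^ n) := by
    simp [ψ]
  have hψQ : (Q.map C).map ψ = (Q.map φ).map C := by
    rw [map_map, map_map]
    congr 1
    ext r
    simp [ψ]
  have hdeg : ((Q.map φ).map C).natDegree ≤ Q.natDegree :=
    natDegree_map_le.trans natDegree_map_le
  calc
    expand B n ((graeffe n Q).map φ)
      = resultant ((X ^ n - C X : R[X][X]).map ψ) ((Q.map C).map ψ) n Q.natDegree :=
        (resultant_map_map _ _ _ _ ψ).symm
    _ = resultant (X ^ n - C (X ^ n)) ((Q.map φ).map C) n Q.natDegree := by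
        rw [hψT, hψQ]
    _ = ∏ i ∈ Finset.range n, ((Q.map φ).map C).eval (C x ^ i * X) := by
        rw [X_pow_sub_C_pow_eq_prod_of_isRoot_cyclotomic hCx]
        simpa only [Finset.card_range] using
          resultant_prod_X_sub_C_left (Finset.range n) (fun i ↦ C x ^ i * X) hdeg
    _ = ∏ i ∈ Finset.range n, (Q.map φ).comp (C (x ^ i) * X) := by
        simp only [eval_map, comp, C_pow]

theorem cyclotomic_product_descends_general [Algebra R B] {n : ℕ} {x : B}
    (hx : (cyclotomic n B).IsRoot x) (Q : R[X]) :
    (∀ k : ℕ, (∏ i ∈ Finset.range n, (Q.map (algebraMap R B)).comp (C (x ^ i) * X)).coeff k ∈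
        Set.range (algebraMap R B)) ∧
      ∃ q : R[X], ∏ i ∈ Finset.range n, (Q.map (algebraMap R B)).comp (C (x ^ i) * X) =
        (q.map (algebraMap R B)).comp (X ^ n) := by
  rw [← expand_map_graeffe (algebraMap R B) hx Q]
  refine ⟨fun k ↦ ?_, graeffe n Q, expand_eq_comp_X_pow n⟩
  rw [← map_expand, coeff_map]
  exact Set.mem_range_self _

end Graeffe

/-- Let `p` be a prime, `Φ ∈ F_p[X]` the reduction mod `p` of the
`(2p−1)`-th cyclotomic polynomial, `A = F_p[X]/(Φ)` and `x = X mod Φ ∈ A`. For `Q ∈ F_p[Y]`,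
let `Q* = ∏_{i=0}^{2p−2} Q(x^i · Y) ∈ A[Y]`. Then every coefficient of `Q*` lies in the image
of `F_p` in `A`, and there exists `q* ∈ F_p[Y]` with `Q* = q*(Y^(2p−1))`. -/
theorem cyclotomic_product_descends
    (p : ℕ) [Fact p.Prime]
    (Q : Polynomial (ZMod p))
    (Qstar : Polynomial (AdjoinRoot (cyclotomic (2 * p - 1) (ZMod p))))
    (hQstar : Qstar = ∏ i ∈ Finset.range (2 * p - 1),
      (Q.map (algebraMap (ZMod p) (AdjoinRoot (cyclotomic (2 * p - 1) (ZMod p))))).comp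
        (C ((AdjoinRoot.root (cyclotomic (2 * p - 1) (ZMod p))) ^ i) * X)) :
    (∀ k : ℕ, Qstar.coeff k ∈
        Set.range (algebraMap (ZMod p) (AdjoinRoot (cyclotomic (2 * p - 1) (ZMod p))))) ∧
      ∃ qstar : Polynomial (ZMod p),
        Qstar = (qstar.map
            (algebraMap (ZMod p) (AdjoinRoot (cyclotomic (2 * p - 1) (ZMod p))))).comp
          (X ^ (2 * p - 1)) := by
  subst hQstar
  exact cyclotomic_product_descends_general (isRoot_cyclotomic_adjoinRoot_root _ _) Q
end

section
/- Let p be a prime and let V ∈ F_p[X] be a nonzero polynomial. View V as an element of F_p[Y][X] and let W ∈ F_p[Y][X] be the remainder of the Euclidean division of V by the monic polynomial X^p − X − Y ∈ F_p[Y][X]. Then the degree of W in the variable Y is at most deg(V)/p; that is, p · deg_Y(W) ≤ deg(V). -/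
open Polynomial

/-!
The remainder modulo `g(X) - Y` is read off the `g`-adic expansion: if `V = ∑ aᵢ gⁱ` with
`deg aᵢ < deg g`, then `V ≡ ∑ aᵢ Yⁱ` modulo `g - Y`. The highest exponent `i` that occurs is at
most `deg V / deg g`, and it bounds the degree in `Y`. Artin–Schreier is the case `g = X ^ p - X`.
-/

section

variable {R : Type*} [CommRing R] {g : R[X]}

lemma degree_C_X_lt_degree_map_C (hg : 0 < g.natDegree) :
    (C X : R[X][X]).degree < (g.map (C : R →+* R[X])).degree := by
  rw [degree_map_eq_of_injective C_injective]
  exact degree_C_le.trans_lt (natDegree_pos_iff_degree_pos.1 hg)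

lemma monic_map_C_sub_C_X (hg : g.Monic) (hd : 0 < g.natDegree) :
    (g.map (C : R →+* R[X]) - C X).Monic :=
  (hg.map C).sub_of_left (degree_C_X_lt_degree_map_C hd)

lemma degree_map_C_sub_C_X (hd : 0 < g.natDegree) :
    (g.map (C : R →+* R[X]) - C X).degree = g.degree := by
  rw [degree_sub_eq_left_of_degree_lt (degree_C_X_lt_degree_map_C hd),
    degree_map_eq_of_injective C_injective]

lemma map_C_modByMonic_map_C_sub_C_X_of_degree_lt (hg : g.Monic) (hd : 0 < g.natDegree)
    {r : R[X]} (hr : r.degree < g.degree) :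
    r.map (C : R →+* R[X]) %ₘ (g.map C - C X) = r.map C := by
  nontriviality R
  rwa [modByMonic_eq_self_iff (monic_map_C_sub_C_X hg hd), degree_map_C_sub_C_X hd,
    degree_map_eq_of_injective C_injective]

lemma map_C_modByMonic_map_C_sub_C_X (hg : g.Monic) (hd : 0 < g.natDegree) (V : R[X]) :
    V.map (C : R →+* R[X]) %ₘ (g.map C - C X) =
      (V %ₘ g).map C + (X : R[X]) • ((V /ₘ g).map C %ₘ (g.map C - C X)) := by
  nontriviality R
  have hV : V.map (C : R →+* R[X]) = (V %ₘ g).map C + (X : R[X]) • (V /ₘ g).map C +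
      (g.map C - C X) * (V /ₘ g).map C := by
    conv_lhs => rw [← modByMonic_add_div V g, Polynomial.map_add, Polynomial.map_mul]
    rw [smul_eq_C_mul]
    ring
  have hmul : ((g.map (C : R →+* R[X]) - C X) * (V /ₘ g).map C) %ₘ (g.map C - C X) = 0 :=
    (modByMonic_eq_zero_iff_dvd (monic_map_C_sub_C_X hg hd)).2 (dvd_mul_right _ _)
  conv_lhs => rw [hV]
  rw [add_modByMonic, add_modByMonic, hmul, add_zero, smul_modByMonic,
    map_C_modByMonic_map_C_sub_C_X_of_degree_lt hg hd (degree_modByMonic_lt V hg)]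

theorem degY_modByMonic_artinSchreier_le_general (hg : g.Monic) (hd : 0 < g.natDegree)
    (V : R[X]) (k : ℕ) :
    g.natDegree * ((V.map (C : R →+* R[X]) %ₘ (g.map C - C X)).coeff k).natDegree ≤
      V.natDegree := by
  induction hn : V.natDegree using Nat.strong_induction_on generalizing V with
  | _ n ih =>
    subst hn
    rcases lt_or_ge V.natDegree g.natDegree with hlt | hle
    · simp [map_C_modByMonic_map_C_sub_C_X_of_degree_lt hg hd (degree_lt_degree hlt), coeff_map]
    · set Q := V /ₘ g
      set c := (Q.map (C : R →+* R[X]) %ₘ (g.map C - C X)).coeff k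
      have hQ : Q.natDegree = V.natDegree - g.natDegree := natDegree_divByMonic V hg
      have hc : g.natDegree * c.natDegree ≤ Q.natDegree := ih _ (by lia) Q rfl
      have hcoeff : (V.map (C : R →+* R[X]) %ₘ (g.map C - C X)).coeff k =
          C ((V %ₘ g).coeff k) + X * c := by
        rw [map_C_modByMonic_map_C_sub_C_X hg hd, coeff_add, coeff_map, coeff_smul, smul_eq_mul]
      have hstep : (C ((V %ₘ g).coeff k) + X * c).natDegree ≤ 1 + c.natDegree :=
        natDegree_C_add.trans_le (natDegree_mul_le_of_le natDegree_X_le le_rfl)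
      calc g.natDegree * ((V.map (C : R →+* R[X]) %ₘ (g.map C - C X)).coeff k).natDegree
          ≤ g.natDegree * (1 + c.natDegree) := by rw [hcoeff]; gcongr
        _ = g.natDegree + g.natDegree * c.natDegree := by ring
        _ ≤ g.natDegree + Q.natDegree := by gcongr
        _ = V.natDegree := by rw [hQ, Nat.add_sub_cancel' hle]

end

lemma monic_X_pow_sub_X {R : Type*} [Ring R] {n : ℕ} (hn : 1 < n) : (X ^ n - X : R[X]).Monic :=
  monic_X_pow_sub (degree_X_le.trans_lt (by exact_mod_cast hn))

/-- Let `p` be a prime and `V ∈ F_p[X]` a nonzero polynomial. View `V` as an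
element of `F_p[Y][X]` and let `W` be the remainder of the Euclidean division of `V` by the
monic polynomial `X^p − X − Y`. Then `p · deg_Y(W) ≤ deg(V)`, where `deg_Y(W)` is the maximal
degree in `Y` of a coefficient of `W`. -/
theorem degY_modByMonic_artinSchreier_le
    (p : ℕ) (hp : p.Prime) (V : Polynomial (ZMod p)) (hV : V ≠ 0)
    (W : Polynomial (Polynomial (ZMod p)))
    (hW : W = (V.map (C : ZMod p →+* Polynomial (ZMod p))) %ₘ (X ^ p - X - C X)) :
    ∀ k : ℕ, p * (W.coeff k).natDegree ≤ V.natDegree := by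
  have : Fact p.Prime := ⟨hp⟩
  have hdeg : (X ^ p - X : (ZMod p)[X]).natDegree = p :=
    FiniteField.X_pow_card_sub_X_natDegree_eq _ hp.one_lt
  simpa [hW, hdeg] using
    degY_modByMonic_artinSchreier_le_general (monic_X_pow_sub_X hp.one_lt)
      (hp.pos.trans_eq hdeg.symm) V
end

section
/- Let K be a finite field of characteristic p and let F ⊆ K be a subfield with exactly p^m elements. Let α, δ, μ ∈ K satisfy δ^p − δ = α and μ^{p^m} − μ = PTr_m(α), where PTr_m(α) = Σ_{ℓ=0}^{m−1} α^{p^ℓ}. Then Δ := δ − μ lies in F, and Δ satisfies Δ^p − Δ = α − (μ^p − μ). -/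
/-! By telescoping, the `m`-th pseudotrace of `δ ^ p - δ` is `δ ^ p ^ m - δ`, so the equation for
`μ` says exactly that `δ - μ` is fixed by the `m`-th power of Frobenius. The fixed points of this
map are the roots of `X ^ p ^ m - X`, which already splits over a field with `p ^ m` elements. -/

/-- The `n`-th pseudotrace `PTr_n(v)`. The base `p` is a free parameter, to be instantiated with the
characteristic of `R`, so that the summands are the first `n` Frobenius iterates of `v`. -/
def pseudotrace {R : Type*} [Semiring R] (p n : ℕ) (v : R) : R :=
  ∑ ℓ ∈ Finset.range n, v ^ p ^ ℓ

section ExpChar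

variable {R : Type*} [CommRing R] (p : ℕ) [ExpChar R p]

theorem pseudotrace_pow_sub_self (n : ℕ) (x : R) :
    pseudotrace p n (x ^ p - x) = x ^ p ^ n - x :=
  calc
    pseudotrace p n (x ^ p - x) = ∑ ℓ ∈ Finset.range n, (x ^ p ^ (ℓ + 1) - x ^ p ^ ℓ) := by
      simp only [pseudotrace, sub_pow_expChar_pow, ← pow_mul, ← pow_succ']
    _ = x ^ p ^ n - x := by
      rw [Finset.sum_range_sub (fun ℓ ↦ x ^ p ^ ℓ), pow_zero, pow_one]

theorem sub_pow_eq_sub_iff_pseudotrace (n : ℕ) (x y : R) :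
    (x - y) ^ p ^ n = x - y ↔ y ^ p ^ n - y = pseudotrace p n (x ^ p - x) := by
  rw [pseudotrace_pow_sub_self, sub_pow_expChar_pow, sub_eq_sub_iff_sub_eq_sub, eq_comm]

end ExpChar

theorem mem_range_iff_pow_natCard_eq {F R : Type*} [Field F] [Finite F] [CommRing R] [IsDomain R]
    (i : F →+* R) {x : R} : x ∈ i.range ↔ x ^ Nat.card F = x := by
  constructor
  · rintro ⟨a, rfl⟩
    have := Fintype.ofFinite F
    rw [← map_pow, Nat.card_eq_fintype_card, FiniteField.pow_card]
  · intro hx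
    exact Polynomial.splits_X_pow_nat_card_sub_X.mem_range_of_isRoot
      (FiniteField.X_pow_card_sub_X_ne_zero F Finite.one_lt_card) (by simp [hx])

theorem artin_schreier_descent_general {F R : Type*} [Field F] [CommRing R] [IsDomain R]
    (i : F →+* R) {p m : ℕ} [ExpChar R p] (hF : Nat.card F = p ^ m)
    {α δ μ : R} (hδ : δ ^ p - δ = α) (hμ : μ ^ p ^ m - μ = pseudotrace p m α) :
    δ - μ ∈ i.range ∧ (δ - μ) ^ p - (δ - μ) = α - (μ ^ p - μ) := by
  subst hδ
  have : Finite F := Nat.finite_of_card_ne_zero (hF ▸ (expChar_pow_pos R p m).ne')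
  constructor
  · rwa [mem_range_iff_pow_natCard_eq, hF, sub_pow_eq_sub_iff_pseudotrace]
  · rw [sub_pow_expChar, sub_sub_sub_comm]

/-- Let `K` be a finite field of characteristic `p` and let `F ⊆ K` be a
subfield with exactly `p^m` elements. Let `α, δ, μ ∈ K` satisfy `δ^p − δ = α` and
`μ^(p^m) − μ = PTr_m(α)` where `PTr_m(α) = Σ_{ℓ=0}^{m−1} α^(p^ℓ)`. Then `Δ := δ − μ` lies in
`F`, and `Δ^p − Δ = α − (μ^p − μ)`. -/
theorem artin_schreier_descent
    (p m : ℕ) (hp : p.Prime) (K : Type*) [Field K] [Finite K] [CharP K p]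
    (F : Subfield K) (hF : Nat.card F = p ^ m)
    (α δ μ : K) (hδ : δ ^ p - δ = α)
    (hμ : μ ^ p ^ m - μ = ∑ ℓ ∈ Finset.range m, α ^ p ^ ℓ) :
    δ - μ ∈ F ∧ (δ - μ) ^ p - (δ - μ) = α - (μ ^ p - μ) := by
  have := ExpChar.prime (R := K) hp
  simpa using artin_schreier_descent_general F.subtype hF hδ hμ
end

section
/- In the Cantor tower over F_p with p odd, for every i ≥ 0 one has Tr_{U_i/F_p}(γ_i) = (−1)^i · Tr_{U_0/F_p}(x_0); in particular Tr_{U_i/F_p}(γ_i) ≠ 0 for all i. -/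
open IntermediateField

/-!
Write `℘ z = z ^ p - z`. In characteristic `p` the trace of a field extension commutes with `℘`.
Hence if `y ^ p - y = g` with `g ∉ ℘ K`, then taking traces gives `[L : K] • g ∈ ℘ K` for every
`L / K` containing `y`, so `p` divides `[L : K]` and `X ^ p - X - g` is the minimal polynomial of
`y`. Its derivative is `-1`, so Euler's formula for `Tr (y ^ j / f' y)` gives `Tr y = 0` and
`Tr (y ^ (p - 1)) = -1` over `K`, and `y ^ (2 * p - 1) = y + g + g * y ^ (p - 1)` has trace `-g`.
By transitivity each step of the tower negates the trace down to the base field `k`, as long as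
that trace lies outside `℘ k`; this condition survives negation, and it means that the trace is
nonzero when `k = 𝔽_p`.
-/

section ArtinSchreier

open Polynomial Module

/-- The Artin–Schreier map `z ↦ z ^ p - z` of a ring of characteristic `p`, bundled as an additive
map so that its image is an additive subgroup. -/
def artinSchreierMap (R : Type*) [CommRing R] (p : ℕ) [ExpChar R p] : R →+ R :=
  (frobenius R p : R →+ R) - AddMonoidHom.id R

theorem artinSchreierMap_apply {R : Type*} [CommRing R] {p : ℕ} [ExpChar R p] (z : R) :
    artinSchreierMap R p z = z ^ p - z := rfl

theorem artinSchreierMap_zmod (p : ℕ) [Fact p.Prime] : artinSchreierMap (ZMod p) p = 0 := by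
  ext z
  simp [artinSchreierMap_apply]

section Polynomial

variable {R : Type*} [CommRing R]

theorem monic_X_pow_sub_X_sub_C [Nontrivial R] {n : ℕ} (hn : 1 < n) (r : R) :
    (X ^ n - X - C r).Monic := by
  rw [sub_sub]
  exact monic_X_pow_sub (by simpa using hn)

theorem natDegree_X_pow_sub_X_sub_C [Nontrivial R] {n : ℕ} (hn : 1 < n) (r : R) :
    (X ^ n - X - C r).natDegree = n := by
  rw [natDegree_sub_C, natDegree_sub_eq_left_of_natDegree_lt (by simpa using hn), natDegree_X_pow]

theorem derivative_X_pow_char_sub_X_sub_C (p : ℕ) [CharP R p] (r : R) :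
    (X ^ p - X - C r).derivative = -1 := by
  simp [derivative_X_pow]

theorem aeval_X_pow_sub_X_sub_C_of_pow_sub_self_eq {A : Type*} [CommRing A] [Algebra R A] {n : ℕ}
    {y : A} {r : R} (hy : y ^ n - y = algebraMap R A r) : aeval y (X ^ n - X - C r) = 0 := by
  simp [hy]

end Polynomial

variable {K L : Type*} [Field K] [Field L] [Algebra K L]

theorem finiteDimensional_of_trace_ne_zero {z : L} (hz : Algebra.trace K L z ≠ 0) :
    FiniteDimensional K L := by
  by_contra hinf
  have hbasis : ¬∃ s : Finset L, Nonempty (Basis s K L) :=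
    fun ⟨_, ⟨b⟩⟩ ↦ hinf (Module.Finite.of_basis b)
  exact hz (by simp [Algebra.trace_eq_zero_of_not_exists_basis K hbasis])

theorem trace_gen_pow_div_aeval_derivative [Algebra.IsSeparable K L] (pb : PowerBasis K L)
    {j : ℕ} (hj : j < pb.dim) :
    Algebra.trace K L (pb.gen ^ j / aeval pb.gen (minpoly K pb.gen).derivative) =
      if j + 1 = pb.dim then 1 else 0 := by
  have := pb.finite
  have hcoeff : (minpolyDiv K pb.gen).coeff (pb.dim - 1) = 1 := by
    rw [← pb.natDegree_minpoly, ← natDegree_minpolyDiv]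
    exact minpolyDiv_monic pb.isIntegral_gen
  have h := pb.basis.trace_mul_traceDual ⟨j, hj⟩ ⟨pb.dim - 1, by omega⟩
  rw [Basis.traceDual_powerBasis_eq, hcoeff, pb.basis_eq_pow, mul_one_div] at h
  simpa [Fin.ext_iff, eq_tsub_iff_add_eq_of_le (Nat.one_le_of_lt hj)] using h

section ExpChar

variable {p : ℕ} [ExpChar K p]

theorem trace_pow_char (z : L) : Algebra.trace K L (z ^ p) = Algebra.trace K L z ^ p := by
  have hp : p ≠ 0 := expChar_ne_zero K p
  by_cases hsep : Algebra.IsSeparable K L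
  swap
  · simp [Algebra.trace_eq_zero_of_not_isSeparable hsep, hp]
  by_cases hfin : FiniteDimensional K L
  swap
  · have htr (w : L) : Algebra.trace K L w = 0 :=
      not_imp_comm.1 finiteDimensional_of_trace_ne_zero hfin
    simp [htr, hp]
  have : ExpChar (AlgebraicClosure K) p :=
    expChar_of_injective_algebraMap (algebraMap K (AlgebraicClosure K)).injective p
  apply (algebraMap K (AlgebraicClosure K)).injective
  simp only [map_pow, trace_eq_sum_embeddings (AlgebraicClosure K), sum_pow_char]

theorem trace_pow_char_sub_self (z : L) :
    Algebra.trace K L (z ^ p - z) = artinSchreierMap K p (Algebra.trace K L z) := by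
  rw [map_sub, trace_pow_char, artinSchreierMap_apply]

end ExpChar

theorem isSeparable_of_pow_char_sub_self_eq {p : ℕ} [CharP K p] {y : L} {g : K}
    (hy : y ^ p - y = algebraMap K L g) : IsSeparable K y := by
  have hsep : (X ^ p - X - C g).Separable := by
    rw [separable_def, derivative_X_pow_char_sub_X_sub_C]
    exact isCoprime_one_right.neg_right
  exact hsep.of_dvd (minpoly.dvd K y (aeval_X_pow_sub_X_sub_C_of_pow_sub_self_eq hy))

variable {p : ℕ} [Fact p.Prime] [CharP K p]

theorem char_dvd_finrank_of_pow_char_sub_self_eq {y : L} {g : K}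
    (hy : y ^ p - y = algebraMap K L g) (hg : g ∉ (artinSchreierMap K p).range) :
    p ∣ finrank K L := by
  have hp : p • (g : K ⧸ (artinSchreierMap K p).range) = 0 := by
    rw [← QuotientAddGroup.mk_nsmul, nsmul_eq_mul, CharP.cast_eq_zero, zero_mul,
      QuotientAddGroup.mk_zero]
  have hne : (g : K ⧸ (artinSchreierMap K p).range) ≠ 0 := mt (QuotientAddGroup.eq_zero_iff g).1 hg
  have hn : finrank K L • g = artinSchreierMap K p (Algebra.trace K L y) := by
    rw [← trace_pow_char_sub_self, hy, Algebra.trace_algebraMap]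
  rw [← addOrderOf_eq_prime hp hne]
  apply addOrderOf_dvd_of_nsmul_eq_zero
  rw [← QuotientAddGroup.mk_nsmul, QuotientAddGroup.eq_zero_iff, hn]
  exact ⟨_, rfl⟩

theorem minpoly_eq_X_pow_char_sub_X_sub_C {y : L} {g : K}
    (hy : y ^ p - y = algebraMap K L g) (hg : g ∉ (artinSchreierMap K p).range) :
    minpoly K y = X ^ p - X - C g := by
  have hp : 1 < p := (Fact.out : p.Prime).one_lt
  have hint : IsIntegral K y := (isSeparable_of_pow_char_sub_self_eq hy).isIntegral
  have hdvd : p ∣ (minpoly K y).natDegree := by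
    rw [← adjoin.finrank hint]
    exact char_dvd_finrank_of_pow_char_sub_self_eq (y := AdjoinSimple.gen K y) (Subtype.ext hy) hg
  refine (eq_of_monic_of_dvd_of_natDegree_le (minpoly.monic hint) (monic_X_pow_sub_X_sub_C hp g)
    (minpoly.dvd K y (aeval_X_pow_sub_X_sub_C_of_pow_sub_self_eq hy)) ?_).symm
  rw [natDegree_X_pow_sub_X_sub_C hp]
  exact Nat.le_of_dvd (minpoly.natDegree_pos hint) hdvd

theorem finrank_adjoin_simple_of_pow_char_sub_self_eq {y : L} {g : K}
    (hy : y ^ p - y = algebraMap K L g) (hg : g ∉ (artinSchreierMap K p).range) :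
    finrank K K⟮y⟯ = p := by
  rw [adjoin.finrank (isSeparable_of_pow_char_sub_self_eq hy).isIntegral,
    minpoly_eq_X_pow_char_sub_X_sub_C hy hg,
    natDegree_X_pow_sub_X_sub_C (Fact.out : p.Prime).one_lt]

theorem trace_gen_pow_of_pow_char_sub_self_eq {y : L} {g : K}
    (hy : y ^ p - y = algebraMap K L g) (hg : g ∉ (artinSchreierMap K p).range)
    {j : ℕ} (hj : j < p) :
    Algebra.trace K K⟮y⟯ (AdjoinSimple.gen K y ^ j) = if j + 1 = p then -1 else 0 := by
  have hsep := isSeparable_of_pow_char_sub_self_eq hy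
  have : Algebra.IsSeparable K K⟮y⟯ := (isSeparable_adjoin_simple_iff_isSeparable K L).2 hsep
  have hdim : (adjoin.powerBasis hsep.isIntegral).dim = p := by
    rw [← (adjoin.powerBasis hsep.isIntegral).finrank,
      finrank_adjoin_simple_of_pow_char_sub_self_eq hy hg]
  have hder : (minpoly K y).derivative = -1 := by
    rw [minpoly_eq_X_pow_char_sub_X_sub_C hy hg, derivative_X_pow_char_sub_X_sub_C]
  have h := trace_gen_pow_div_aeval_derivative (adjoin.powerBasis hsep.isIntegral)
    (hj.trans_eq hdim.symm)
  rw [adjoin.powerBasis_gen, minpoly_gen, hder, hdim] at h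
  rw [← neg_inj, ← map_neg]
  simpa [div_neg, apply_ite] using h

theorem trace_gen_pow_two_mul_char_sub_one (hodd : p ≠ 2) {y : L} {g : K}
    (hy : y ^ p - y = algebraMap K L g) (hg : g ∉ (artinSchreierMap K p).range) :
    Algebra.trace K K⟮y⟯ (AdjoinSimple.gen K y ^ (2 * p - 1)) = -g := by
  have hp : 2 < p := (Fact.out : p.Prime).two_le.lt_of_ne' hodd
  set θ := AdjoinSimple.gen K y
  have hθ : θ ^ p = θ + algebraMap K K⟮y⟯ g := sub_eq_iff_eq_add'.1 (Subtype.ext hy)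
  have hsplit : θ ^ (2 * p - 1) = θ ^ 1 + algebraMap K K⟮y⟯ g + g • θ ^ (p - 1) := by
    calc θ ^ (2 * p - 1) = θ ^ p * θ ^ (p - 1) := by rw [← pow_add]; congr 1; omega
      _ = θ ^ p + g • θ ^ (p - 1) := by
        rw [hθ, add_mul, mul_pow_sub_one (by omega), ← Algebra.smul_def, hθ]
      _ = θ ^ 1 + algebraMap K K⟮y⟯ g + g • θ ^ (p - 1) := by rw [hθ, pow_one]
  have htrace_one : Algebra.trace K K⟮y⟯ (θ ^ 1) = 0 := by
    rw [trace_gen_pow_of_pow_char_sub_self_eq hy hg (by omega), if_neg (by omega)]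
  have htrace_sub_one : Algebra.trace K K⟮y⟯ (θ ^ (p - 1)) = -1 := by
    rw [trace_gen_pow_of_pow_char_sub_self_eq hy hg (by omega), if_pos (by omega)]
  have htrace_const : Algebra.trace K K⟮y⟯ (algebraMap K K⟮y⟯ g) = 0 := by
    rw [Algebra.trace_algebraMap, finrank_adjoin_simple_of_pow_char_sub_self_eq hy hg, nsmul_eq_mul,
      CharP.cast_eq_zero, zero_mul]
  rw [hsplit, map_add, map_add, map_smul, htrace_one, htrace_sub_one, htrace_const]
  simp

end ArtinSchreier

theorem trace_tower_gen_pow_two_mul_char_sub_one {p : ℕ} [Fact p.Prime]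
    {k K L : Type*} [Field k] [Field K] [Field L] [CharP k p]
    [Algebra k K] [Algebra k L] [Algebra K L] [IsScalarTower k K L] (hodd : p ≠ 2) {y : L} {g : K}
    (hy : y ^ p - y = algebraMap K L g) (hg : Algebra.trace k K g ∉ (artinSchreierMap k p).range) :
    Algebra.trace k K⟮y⟯ (AdjoinSimple.gen K y ^ (2 * p - 1)) = -Algebra.trace k K g := by
  have : CharP K p := charP_of_injective_algebraMap (algebraMap k K).injective p
  have hgK : g ∉ (artinSchreierMap K p).range := by
    rintro ⟨z, rfl⟩
    exact hg ⟨Algebra.trace k K z, (trace_pow_char_sub_self z).symm⟩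
  have : FiniteDimensional k K :=
    finiteDimensional_of_trace_ne_zero (ne_of_mem_of_not_mem (zero_mem _) hg).symm
  have : FiniteDimensional K K⟮y⟯ :=
    adjoin.finiteDimensional (isSeparable_of_pow_char_sub_self_eq hy).isIntegral
  rw [← Algebra.trace_trace (S := K), trace_gen_pow_two_mul_char_sub_one hodd hy hgK, map_neg]

theorem exists_mem_trace_pow_two_mul_char_sub_one {p : ℕ} [Fact p.Prime]
    {k L : Type*} [Field k] [CharP k p] [Field L] [Algebra k L] (hodd : p ≠ 2)
    {F E : IntermediateField k L} {y z : L} {g : F} (hE : E = F⟮y⟯.restrictScalars k)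
    (hy : y ^ p - y = g) (hz : z = y ^ (2 * p - 1))
    (hg : Algebra.trace k F g ∉ (artinSchreierMap k p).range) :
    ∃ hzE : z ∈ E, Algebra.trace k E ⟨z, hzE⟩ = -Algebra.trace k F g := by
  subst hE hz
  exact ⟨pow_mem (mem_adjoin_simple_self F y) _,
    trace_tower_gen_pow_two_mul_char_sub_one (k := k) (K := F) hodd hy hg⟩

theorem adjoin_image_Iic_succ {k L : Type*} [Field k] [Field L] [Algebra k L]
    (x : ℕ → L) (i : ℕ) :
    adjoin k (x '' Set.Iic (i + 1)) =
      (adjoin k (x '' Set.Iic i))⟮x (i + 1)⟯.restrictScalars k := by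
  rw [adjoin_adjoin_left, ← Order.succ_eq_add_one, Order.Iic_succ, Set.image_insert_eq,
    Set.union_singleton]

theorem cantor_tower_trace_gamma_general {p : ℕ} [Fact p.Prime] (hodd : p ≠ 2)
    {k Ω : Type*} [Field k] [CharP k p] [Field Ω] [Algebra k Ω]
    {x : ℕ → Ω} {U : ℕ → IntermediateField k Ω}
    (hU : ∀ i, U (i + 1) = (U i)⟮x (i + 1)⟯.restrictScalars k)
    (hx0 : x 0 ∈ U 0)
    (htr0 : Algebra.trace k (U 0) ⟨x 0, hx0⟩ ∉ (artinSchreierMap k p).range)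
    (hx1 : x 1 ^ p - x 1 = x 0)
    (hxi : ∀ i, 1 ≤ i → x (i + 1) ^ p - x (i + 1) = x i ^ (2 * p - 1))
    {γ : ℕ → Ω} (hγ0 : γ 0 = x 0) (hγ : ∀ i, 1 ≤ i → γ i = x i ^ (2 * p - 1)) (i : ℕ) :
    ∃ hγi : γ i ∈ U i,
      Algebra.trace k (U i) ⟨γ i, hγi⟩ = (-1) ^ i * Algebra.trace k (U 0) ⟨x 0, hx0⟩ ∧
        Algebra.trace k (U i) ⟨γ i, hγi⟩ ∉ (artinSchreierMap k p).range := by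
  have hroot (i : ℕ) : x (i + 1) ^ p - x (i + 1) = γ i := by
    rcases i.eq_zero_or_pos with rfl | hi
    · rw [hγ0, hx1]
    · rw [hγ i hi, hxi i hi]
  induction i with
  | zero => simpa [hγ0, hx0] using htr0
  | succ i ih =>
    obtain ⟨hγi, htr, hnot⟩ := ih
    obtain ⟨hγi', htr'⟩ := exists_mem_trace_pow_two_mul_char_sub_one hodd (hU i) (hroot i)
      (hγ (i + 1) i.succ_pos) hnot
    refine ⟨hγi', ?_, ?_⟩
    · rw [htr', htr, pow_succ, mul_neg_one, neg_mul]
    · rwa [htr', neg_mem_iff]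

/-- In the Cantor tower over `F_p` with `p` odd, for every `i ≥ 0` one has
`Tr_{U_i/F_p}(γ_i) = (−1)^i · Tr_{U_0/F_p}(x_0)`; in particular `Tr_{U_i/F_p}(γ_i) ≠ 0`. -/
theorem cantor_tower_trace_gamma
    (p d : ℕ) [Fact p.Prime] (hodd : p ≠ 2) (hd : 1 ≤ d)
    (Ω : Type*) [Field Ω] [Algebra (ZMod p) Ω] [IsAlgClosure (ZMod p) Ω]
    (x : ℕ → Ω)
    (U : ℕ → IntermediateField (ZMod p) Ω)
    (hU : ∀ i, U i = IntermediateField.adjoin (ZMod p) (x '' Set.Iic i))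
    (hdeg : Module.finrank (ZMod p) ↥(U 0) = d)
    (hx0 : x 0 ∈ U 0)
    (htr0 : Algebra.trace (ZMod p) ↥(U 0) ⟨x 0, hx0⟩ ≠ 0)
    (hx1 : x 1 ^ p - x 1 = x 0)
    (hxi : ∀ i, 1 ≤ i → x (i + 1) ^ p - x (i + 1) = x i ^ (2 * p - 1))
    (γ : ℕ → Ω) (hγ0 : γ 0 = x 0) (hγ : ∀ i, 1 ≤ i → γ i = x i ^ (2 * p - 1)) :
    ∀ i, ∃ hγi : γ i ∈ U i,
      Algebra.trace (ZMod p) ↥(U i) ⟨γ i, hγi⟩ =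
          (-1 : ZMod p) ^ i * Algebra.trace (ZMod p) ↥(U 0) ⟨x 0, hx0⟩ ∧
        Algebra.trace (ZMod p) ↥(U i) ⟨γ i, hγi⟩ ≠ 0 := by
  have hstep (i : ℕ) : U (i + 1) = (U i)⟮x (i + 1)⟯.restrictScalars (ZMod p) := by
    rw [hU, hU, adjoin_image_Iic_succ]
  simpa [artinSchreierMap_zmod] using
    cantor_tower_trace_gamma_general hodd hstep hx0 (by simpa [artinSchreierMap_zmod])
      hx1 hxi hγ0 hγ
end
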